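/- For n ≥ 1, the number of synchronized Tamari intervals of size n equals (2/(n(n+1))) · C(3n, n-1). -/

import Mathlib

/-- Binary trees: a leaf or a binary node with two subtrees. -/
inductive BT : Type
  | leaf : BT
  | node : BT → BT → BT

namespace BT

/-- Number of binary (internal) nodes. -/
def size : BT → ℕ
  | leaf => 0
  | node l r => l.size + r.size + 1

/-- One right rotation somewhere in the tree: ((A,B),C) ↦ (A,(B,C)). -/
inductive Rot : BT → BT → Prop
  | rotate (A B C : BT) : Rot (node (node A B) C) (node A (node B C))
  | left {l l' : BT} (r : BT) : Rot l l' → Rot (node l r) (node l' r)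
  | right (l : BT) {r r' : BT} : Rot r r' → Rot (node l r) (node l r')

/-- Tamari order: reflexive-transitive closure of right rotation. -/
def tle (T T' : BT) : Prop := Relation.ReflTransGen Rot T T'

/-- Bracket-vector: sizes of right subtrees of nodes, in infix order. -/
def bracket : BT → List ℕ
  | leaf => []
  | node l r => bracket l ++ r.size :: bracket r

/-- Dual bracket-vector: sizes of left subtrees of nodes, in infix order. -/
def dualBracket : BT → List ℕ
  | leaf => []
  | node l r => dualBracket l ++ l.size :: dualBracket r

/-- Canopy word: for each leaf (left to right), 1 if it is a left child, 0 if a right child;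
the argument `b` is the value assigned to the tree if it is itself a leaf. -/
def canopyAux (b : ℕ) : BT → List ℕ
  | leaf => [b]
  | node l r => canopyAux 1 l ++ canopyAux 0 r

/-- Canopy-vector of a binary tree. -/
def canopy (T : BT) : List ℕ := canopyAux 1 T

/-- Left-right mirror. -/
def mir : BT → BT
  | leaf => leaf
  | node l r => node (mir r) (mir l)

/-- Tamari interval of size n. -/
def interval (p : BT × BT) (n : ℕ) : Prop :=
  p.1.size = n ∧ p.2.size = n ∧ tle p.1 p.2

/-- Tamari interval (of unspecified size). -/
def isInt (p : BT × BT) : Prop := p.1.size = p.2.size ∧ tle p.1 p.2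

/-- The rise operation (T,T') ↦ ((T,ε),(ε,T')). -/
def riseF (p : BT × BT) : BT × BT := (node p.1 leaf, node leaf p.2)

/-- An interval is modern when its rise is again an interval. -/
def modern (p : BT × BT) : Prop := tle (node p.1 leaf) (node leaf p.2)

/-- Infinitely modern: every iterated rise is an interval. -/
def infModern (p : BT × BT) : Prop :=
  ∀ k : ℕ, tle ((riseF^[k] p).1) ((riseF^[k] p).2)

/-- Synchronized: equal canopies. -/
def synced (p : BT × BT) : Prop := canopy p.1 = canopy p.2

/-- Self-dual: equal to its dual (mir T', mir T). -/
def selfDual (p : BT × BT) : Prop := mir p.2 = p.1 ∧ mir p.1 = p.2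

/-- Number of positions where the two canopies agree. -/
def agreeCount (p : BT × BT) : ℕ :=
  ((List.range (p.1.size + 1)).filter
    (fun i => (canopy p.1).getD i 0 == (canopy p.2).getD i 0)).length

/-- Number of canopy positions of joint type (a on top, b on bottom), for an interval (T,T')
with T' the upper tree. -/
def typeCount (a b : ℕ) (p : BT × BT) : ℕ :=
  ((List.range (p.1.size + 1)).filter
    (fun i => ((canopy p.2).getD i 0 == a) && ((canopy p.1).getD i 0 == b))).length

end BT


namespace BT

/-- Graft `A` on the leftmost leaf of `B`. -/
def app (A : BT) : BT → BT
  | leaf => A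
  | node l r => node (app A l) r

/-- Number of nodes on the left spine. -/
def spine : BT → ℕ
  | leaf => 0
  | node l _ => spine l + 1

/-- All ways to write a tree as `app s g` with `s` not a leaf. -/
noncomputable def cuts : BT → Finset (BT × BT)
  | leaf => ∅
  | node l r => by
      classical
      exact insert (node l r, leaf) ((cuts l).image (fun q => (q.1, node q.2 r)))

open Classical in
/-- Trees lows the given tree, with the same canopy. -/
noncomputable def lows : BT → Finset BT
  | leaf => {leaf}
  | node l r =>
      (lows l ×ˢ (if r = leaf then {(leaf, leaf)} else (lows r).biUnion cuts)).image
        (fun q => app (node q.1 q.2.1) q.2.2)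

open Classical in
/-- Pairs attached to the right subtree. -/
noncomputable def cutBelow (r : BT) : Finset (BT × BT) :=
  if r = leaf then {(leaf, leaf)} else (lows r).biUnion cuts

lemma app_leaf_left (B : BT) : app leaf B = B := by
  induction B with
  | leaf => rfl
  | node l r ihl _ => simp [app, ihl]

lemma size_app (A B : BT) : (app A B).size = A.size + B.size := by
  induction B with
  | leaf => simp [app, size]
  | node l r ihl _ => simp [app, size, ihl]; omega

lemma spine_app (A B : BT) : spine (app A B) = spine A + spine B := by
  induction B with
  | leaf => simp [app, spine]
  | node l r ihl _ => simp [app, spine, ihl]; omega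

lemma size_eq_zero {T : BT} (h : T.size = 0) : T = leaf := by
  cases T with
  | leaf => rfl
  | node l r => simp [size] at h

lemma Rot.size_eq {T T' : BT} (h : Rot T T') : T.size = T'.size := by
  induction h with
  | rotate A B C => simp [size]; omega
  | left r _ ih => simp [size, ih]
  | right l _ ih => simp [size, ih]

lemma tle.size_eq {T T' : BT} (h : tle T T') : T.size = T'.size := by
  induction h with
  | refl => rfl
  | tail _ h ih => rw [ih, h.size_eq]

lemma tle.refl (T : BT) : tle T T := Relation.ReflTransGen.refl

lemma tle.trans {A B C : BT} (h : tle A B) (h' : tle B C) : tle A C :=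
  Relation.ReflTransGen.trans h h'

lemma Rot.tle {A B : BT} (h : Rot A B) : tle A B := Relation.ReflTransGen.single h

lemma tle.left {l l' : BT} (h : tle l l') (r : BT) : tle (node l r) (node l' r) := by
  induction h with
  | refl => exact tle.refl _
  | tail _ h ih => exact ih.trans (Rot.left r h).tle

lemma tle.right {r r' : BT} (l : BT) (h : tle r r') : tle (node l r) (node l r') := by
  induction h with
  | refl => exact tle.refl _
  | tail _ h ih => exact ih.trans (Rot.right l h).tle

lemma app_tle (f s g : BT) : tle (app (node f s) g) (node f (app s g)) := by
  induction g with
  | leaf => exact tle.refl _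
  | node l r ihl _ =>
    exact (ihl.left r).trans (Rot.rotate _ _ _).tle

lemma rot_app {T f s g : BT} (h : Rot T (app (node f s) g)) :
    ∃ f0 s0 g0, T = app (node f0 s0) g0 ∧ tle f0 f ∧ tle (app s0 g0) (app s g) := by
  induction g generalizing T with
  | leaf =>
    simp only [app] at h
    cases h with
    | rotate _ B C => exact ⟨f, B, node leaf C, rfl, tle.refl _, tle.refl _⟩
    | left _ h => exact ⟨_, s, leaf, rfl, h.tle, tle.refl _⟩
    | right _ h => exact ⟨f, _, leaf, rfl, tle.refl _, h.tle⟩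
  | node l r ihl _ =>
    simp only [app] at h
    generalize hx : app (node f s) l = x at h
    cases h with
    | rotate _ B C =>
      subst hx
      exact ⟨f, s, node (node l B) C, rfl, tle.refl _, (Rot.rotate _ _ _).tle⟩
    | left _ h =>
      subst hx
      obtain ⟨f0, s0, g0, rfl, h1, h2⟩ := ihl h
      exact ⟨f0, s0, node g0 r, rfl, h1, h2.left r⟩
    | right _ h =>
      subst hx
      rename_i r0
      exact ⟨f, s, node l r0, rfl, tle.refl _, h.tle.right _⟩

lemma tle_node_iff (T l r : BT) : tle T (node l r) ↔
    ∃ f s g, T = app (node f s) g ∧ tle f l ∧ tle (app s g) r := by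
  constructor
  · intro h
    induction h using Relation.ReflTransGen.head_induction_on with
    | refl => exact ⟨l, r, leaf, rfl, tle.refl _, tle.refl _⟩
    | head h _ ih =>
      obtain ⟨f, s, g, rfl, h1, h2⟩ := ih
      obtain ⟨f0, s0, g0, rfl, h3, h4⟩ := rot_app h
      exact ⟨f0, s0, g0, rfl, h3.trans h1, h4.trans h2⟩
  · rintro ⟨f, s, g, rfl, h1, h2⟩
    exact (app_tle f s g).trans ((h1.left _).trans (h2.right _))

lemma tle_leaf_iff (T : BT) : tle T leaf ↔ T = leaf := by
  constructor
  · intro h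
    exact size_eq_zero (by rw [h.size_eq]; rfl)
  · rintro rfl; exact tle.refl _

lemma app_inj {f s g f' s' g' : BT} (hs : f.size = f'.size)
    (h : app (node f s) g = app (node f' s') g') : f = f' ∧ s = s' ∧ g = g' := by
  induction g generalizing g' with
  | leaf =>
    cases g' with
    | leaf => simpa [app] using h
    | node l r =>
      simp only [app, node.injEq] at h
      have := congrArg size h.1
      simp [size_app, size] at this
      omega
  | node l r ihl _ =>
    cases g' with
    | leaf =>
      simp only [app, node.injEq] at h
      have := congrArg size h.1
      simp [size_app, size] at this
      omega
    | node l' r' =>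
      simp only [app, node.injEq] at h
      obtain ⟨h1, h2, h3⟩ := ihl h.1
      exact ⟨h1, h2, by rw [h3, h.2]⟩

lemma length_canopyAux (b : ℕ) (T : BT) : (canopyAux b T).length = T.size + 1 := by
  induction T generalizing b with
  | leaf => rfl
  | node l r ihl ihr => simp [canopyAux, size, ihl, ihr]; omega

lemma canopyAux_one (T : BT) : canopyAux 1 T = 1 :: (canopyAux 1 T).tail := by
  induction T with
  | leaf => rfl
  | node l r ihl _ => simp only [canopyAux]; rw [ihl]; rfl

lemma canopyAux_one_app (A B : BT) :
    canopyAux 1 (app A B) = canopyAux 1 A ++ (canopyAux 1 B).tail := by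
  induction B with
  | leaf => simp [app, canopyAux]
  | node l r ihl _ =>
    simp only [app, canopyAux]
    rw [ihl, canopyAux_one l]
    simp

lemma canopyAux_node (b : ℕ) (l r : BT) : canopyAux b (node l r) = canopyAux 1 (node l r) := rfl

lemma append_eq_iff {a b c d : List ℕ} (h : a.length = c.length) :
    a ++ b = c ++ d ↔ a = c ∧ b = d :=
  ⟨fun e => List.append_inj e h, fun e => by rw [e.1, e.2]⟩

lemma synced_node_iff {f s g l r : BT} (h1 : f.size = l.size) (h2 : (app s g).size = r.size) :
    canopy (app (node f s) g) = canopy (node l r) ↔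
      canopy f = canopy l ∧ ((s = leaf ∧ g = leaf ∧ r = leaf) ∨
        (s ≠ leaf ∧ r ≠ leaf ∧ canopy (app s g) = canopy r)) := by
  unfold canopy
  rw [canopyAux_one_app, canopyAux, canopyAux, List.append_assoc,
    append_eq_iff (by simp [length_canopyAux, h1])]
  refine and_congr_right fun _ => ?_
  rw [size_app] at h2
  cases s with
  | leaf =>
    cases r with
    | leaf =>
      have : g = leaf := size_eq_zero (by simpa [size] using h2)
      subst this
      simp [canopyAux]
    | node rl rr =>
      rw [canopyAux_node, canopyAux_one (node rl rr)]
      simp [canopyAux]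
  | node sl sr =>
    cases r with
    | leaf => simp [size] at h2
    | node rl rr =>
      rw [canopyAux_one_app, canopyAux_node, canopyAux_node 0 rl rr]
      simp

lemma mem_cuts (T s g : BT) : (s, g) ∈ cuts T ↔ app s g = T ∧ s ≠ leaf := by
  induction T generalizing s g with
  | leaf =>
    simp only [cuts, Finset.notMem_empty, false_iff, not_and, not_not]
    intro h
    have := congrArg size h
    rw [size_app] at this
    exact size_eq_zero (by simp [size] at this; omega)
  | node l r ihl _ =>
    simp only [cuts, Finset.mem_insert, Finset.mem_image, Prod.mk.injEq, Prod.exists]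
    cases g with
    | leaf =>
      simp [app]
      rintro rfl
      simp
    | node gl gr =>
      simp only [app, node.injEq]
      constructor
      · rintro (⟨_, h⟩ | ⟨a, b, h, rfl, rfl, rfl⟩)
        · cases h
        · rw [ihl] at h
          exact ⟨⟨h.1, rfl⟩, h.2⟩
      · rintro ⟨⟨h, rfl⟩, h'⟩
        exact Or.inr ⟨s, gl, (ihl _ _).2 ⟨h, h'⟩, rfl, rfl, rfl⟩

lemma lows_node (l r : BT) : lows (node l r) =
    by classical exact (lows l ×ˢ cutBelow r).image (fun q => app (node q.1 q.2.1) q.2.2) := by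
  simp only [lows, cutBelow]

lemma mem_lows (T T' : BT) : T ∈ lows T' ↔ tle T T' ∧ canopy T = canopy T' := by
  induction T' generalizing T with
  | leaf =>
    simp only [lows, Finset.mem_singleton, tle_leaf_iff]
    constructor
    · rintro rfl; simp
    · exact fun h => h.1
  | node l r ihl ihr =>
    have key : ∀ s g, (s, g) ∈ cutBelow r ↔ (tle (app s g) r ∧
        ((s = leaf ∧ g = leaf ∧ r = leaf) ∨
        (s ≠ leaf ∧ r ≠ leaf ∧ canopy (app s g) = canopy r))) := by
      intro s g
      unfold cutBelow
      split_ifs with hr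
      · subst hr
        simp only [Finset.mem_singleton, Prod.mk.injEq, ne_eq, not_true_eq_false, false_and,
          and_false, or_false, and_true]
        constructor
        · rintro ⟨rfl, rfl⟩
          exact ⟨tle.refl _, rfl, rfl⟩
        · exact fun h => h.2
      · simp only [Finset.mem_biUnion, mem_cuts, ihr, hr, and_false, false_or, ne_eq,
          not_false_eq_true, true_and]
        constructor
        · rintro ⟨a, ⟨h1, h2⟩, rfl, h3⟩
          exact ⟨h1, h3, h2⟩
        · rintro ⟨h1, h3, h2⟩
          exact ⟨_, ⟨h1, h2⟩, rfl, h3⟩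
    rw [lows_node]
    simp only [Finset.mem_image, Finset.mem_product, Prod.exists]
    rw [tle_node_iff]
    constructor
    · rintro ⟨f, s, g, ⟨h1, h2⟩, rfl⟩
      rw [key] at h2
      rw [ihl] at h1
      exact ⟨⟨f, s, g, rfl, h1.1, h2.1⟩,
        (synced_node_iff h1.1.size_eq h2.1.size_eq).2 ⟨h1.2, h2.2⟩⟩
    · rintro ⟨⟨f, s, g, rfl, h1, h2⟩, h3⟩
      rw [synced_node_iff h1.size_eq h2.size_eq] at h3
      exact ⟨f, s, g, ⟨(ihl _).2 ⟨h1, h3.1⟩, (key _ _).2 ⟨h2, h3.2⟩⟩, rfl⟩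

section weights
variable {A : Type*} [CommRing A]

/-- Weighted count of the trees lows a given tree. -/
noncomputable def wt (x : A) (T : BT) : A := ∑ S ∈ lows T, x ^ spine S

/-- Weighted count of cut pairs. -/
noncomputable def wtCut (x : A) (T : BT) : A := ∑ q ∈ cutBelow T, x ^ spine q.2

lemma wt_leaf (x : A) : wt x leaf = 1 := by simp [wt, lows, spine]

lemma wt_node (x : A) (l r : BT) : wt x (node l r) = wt x l * x * wtCut x r := by
  classical
  unfold wt wtCut
  rw [lows_node, Finset.sum_image]
  · rw [Finset.sum_mul, Finset.sum_mul_sum, Finset.sum_product]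
    refine Finset.sum_congr rfl fun f _ => Finset.sum_congr rfl fun q _ => ?_
    simp only [spine_app, spine]
    ring
  · rintro ⟨f, s, g⟩ h ⟨f', s', g'⟩ h' e
    simp only [Finset.coe_product, Set.mem_prod, Finset.mem_coe, mem_lows] at h h'
    obtain ⟨rfl, rfl, rfl⟩ := app_inj (h.1.1.size_eq.trans h'.1.1.size_eq.symm) e
    rfl

lemma sum_cuts (x : A) (T : BT) : (x - 1) * ∑ q ∈ cuts T, x ^ spine q.2 = x ^ spine T - 1 := by
  classical
  induction T with
  | leaf => simp [cuts, spine]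
  | node l r ihl _ =>
    have hc : cuts (node l r) =
      insert (node l r, leaf) ((cuts l).image (fun q => (q.1, node q.2 r))) := by
      simp only [cuts]
    rw [hc, Finset.sum_insert (by simp), Finset.sum_image (by rintro ⟨a, b⟩ _ ⟨c, d⟩ _; simp)]
    simp only [spine, pow_succ, ← Finset.sum_mul]
    linear_combination x * ihl

open Classical in
lemma wtCut_eq (x : A) (T : BT) :
    (x - 1) * wtCut x T = (if T = leaf then x - 1 else 0) + wt x T - wt 1 T := by
  unfold wtCut cutBelow
  split_ifs with h
  · subst h; simp [wt_leaf, spine]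
  · rw [Finset.sum_biUnion, Finset.mul_sum]
    · simp only [sum_cuts, wt]
      simp
    · intro S _ S' _ hne
      rw [Function.onFun, Finset.disjoint_left]
      rintro ⟨s, g⟩ h1 h2
      rw [mem_cuts] at h1 h2
      exact hne (h1.1.symm.trans h2.1)

lemma finite_size (n : ℕ) : {T : BT | T.size ≤ n}.Finite := by
  induction n with
  | zero =>
    refine (Set.finite_singleton leaf).subset ?_
    intro T hT
    exact size_eq_zero (Nat.le_zero.1 hT)
  | succ n ih =>
    refine ((Set.finite_singleton leaf).union (Set.Finite.image2 node ih ih)).subset ?_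
    rintro (_ | ⟨l, r⟩) hT
    · left; rfl
    · right
      simp only [Set.mem_ofPred_eq, size] at hT
      exact ⟨l, by simp only [Set.mem_ofPred_eq]; omega, r,
        by simp only [Set.mem_ofPred_eq]; omega, rfl⟩

/-- The finite set of trees of size `n`. -/
noncomputable def trees (n : ℕ) : Finset BT :=
  ((finite_size n).subset (t := {T : BT | T.size = n}) (fun _ h => le_of_eq h)).toFinset

lemma mem_trees (n : ℕ) (T : BT) : T ∈ trees n ↔ T.size = n := by simp [trees]

lemma trees_zero : trees 0 = {leaf} := by
  ext T
  rw [mem_trees, Finset.mem_singleton]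
  exact ⟨size_eq_zero, fun h => by rw [h]; rfl⟩

lemma sum_trees_succ (n : ℕ) (F : BT → A) : ∑ T ∈ trees (n + 1), F T =
    ∑ ij ∈ Finset.HasAntidiagonal.antidiagonal n, ∑ l ∈ trees ij.1, ∑ r ∈ trees ij.2, F (node l r) := by
  classical
  have : trees (n + 1) = (Finset.HasAntidiagonal.antidiagonal n).biUnion
      (fun ij => (trees ij.1 ×ˢ trees ij.2).image (fun q => node q.1 q.2)) := by
    ext T
    simp only [mem_trees, Finset.mem_biUnion, Finset.mem_image, Finset.mem_product,
      Finset.HasAntidiagonal.mem_antidiagonal, Prod.exists]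
    constructor
    · intro h
      cases T with
      | leaf => simp [size] at h
      | node l r =>
        simp only [size] at h
        exact ⟨l.size, r.size, by omega, l, r, ⟨rfl, rfl⟩, rfl⟩
    · rintro ⟨i, j, h, l, r, ⟨rfl, rfl⟩, rfl⟩
      simp only [size]; omega
  rw [this, Finset.sum_biUnion]
  · refine Finset.sum_congr rfl fun ij _ => ?_
    rw [Finset.sum_image, Finset.sum_product]
    rintro ⟨a, b⟩ _ ⟨c, d⟩ _
    simp
  · rintro ⟨i, j⟩ _ ⟨i', j'⟩ _ hne
    rw [Function.onFun, Finset.disjoint_left]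
    intro T h1 h2
    simp only [mem_trees, Finset.mem_image, Finset.mem_product, Prod.exists] at h1 h2
    obtain ⟨l, r, ⟨rfl, rfl⟩, rfl⟩ := h1
    obtain ⟨l', r', ⟨rfl, rfl⟩, h⟩ := h2
    rw [node.injEq] at h
    apply hne
    rw [h.1, h.2]

/-- Weighted count of synchronized intervals of size `n`. -/
noncomputable def pp (x : A) (n : ℕ) : A := ∑ T ∈ trees n, wt x T

/-- Weighted count of cut pairs of size `n`. -/
noncomputable def qq (x : A) (n : ℕ) : A := ∑ T ∈ trees n, wtCut x T

lemma pp_zero (x : A) : pp x 0 = 1 := by simp [pp, trees_zero, wt_leaf]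

lemma pp_succ (x : A) (n : ℕ) : pp x (n + 1) =
    x * ∑ ij ∈ Finset.HasAntidiagonal.antidiagonal n, pp x ij.1 * qq x ij.2 := by
  rw [pp, sum_trees_succ, Finset.mul_sum]
  refine Finset.sum_congr rfl fun ij _ => ?_
  rw [pp, qq, Finset.sum_mul_sum, Finset.mul_sum]
  refine Finset.sum_congr rfl fun l _ => ?_
  rw [Finset.mul_sum]
  refine Finset.sum_congr rfl fun r _ => ?_
  rw [wt_node]; ring

lemma qq_eq (x : A) (n : ℕ) :
    (x - 1) * qq x n = (if n = 0 then x - 1 else 0) + pp x n - pp 1 n := by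
  classical
  unfold qq pp
  rw [Finset.mul_sum]
  simp only [wtCut_eq]
  rw [Finset.sum_sub_distrib, Finset.sum_add_distrib]
  congr 2
  rw [Finset.sum_ite_eq']
  simp only [mem_trees, size, eq_comm]

lemma map_pp {B : Type*} [CommRing B] (φ : A →+* B) (x : A) (n : ℕ) :
    φ (pp x n) = pp (φ x) n := by
  simp [pp, wt]

lemma ncard_eq (n : ℕ) :
    ((Set.ncard {p : BT × BT | interval p n ∧ synced p} : ℕ) : A) = pp (1 : A) n := by
  classical
  have : {p : BT × BT | interval p n ∧ synced p} =
      (((trees n).biUnion (fun T' => (lows T').image (fun T => (T, T'))) :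
        Finset (BT × BT)) : Set (BT × BT)) := by
    ext ⟨T, T'⟩
    simp only [Set.mem_ofPred_eq, interval, synced, Finset.coe_biUnion, Finset.mem_coe,
      mem_trees, Finset.coe_image, Set.mem_iUnion, Set.mem_image, mem_lows, Prod.mk.injEq]
    constructor
    · rintro ⟨⟨_, h2, h3⟩, h4⟩
      exact ⟨T', h2, T, ⟨h3, h4⟩, rfl, rfl⟩
    · rintro ⟨_, h2, _, ⟨h3, h4⟩, rfl, rfl⟩
      exact ⟨⟨h3.size_eq.trans h2, h2, h3⟩, h4⟩
  rw [this, Set.ncard_coe_finset, Finset.card_biUnion]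
  · simp only [pp, wt, one_pow, Finset.sum_const, nsmul_eq_mul, mul_one, Nat.cast_sum]
    refine Finset.sum_congr rfl fun T' _ => ?_
    rw [Finset.card_image_of_injective]
    intro a b h
    simpa using h
  · intro S _ S' _ hne
    rw [Function.onFun, Finset.disjoint_left]
    rintro ⟨a, b⟩ h1 h2
    simp only [Finset.mem_image, Prod.mk.injEq] at h1 h2
    obtain ⟨_, _, _, rfl⟩ := h1
    obtain ⟨_, _, _, rfl⟩ := h2
    exact hne rfl

end weights

end BT

section algebra
variable {A : Type*} [CommRing A]

lemma conv_dvd (t : A) (p q : ℕ → A) (N : ℕ) :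
    t ^ N ∣ (∑ i ∈ Finset.range N, p i * t ^ i) * (∑ i ∈ Finset.range N, q i * t ^ i) -
      ∑ n ∈ Finset.range N,
        (∑ ij ∈ Finset.HasAntidiagonal.antidiagonal n, p ij.1 * q ij.2) * t ^ n := by
  let poly : (ℕ → A) → Polynomial A :=
    fun a => ∑ i ∈ Finset.range N, Polynomial.C (a i) * Polynomial.X ^ i
  have hc : ∀ a d, (poly a).coeff d = if d < N then a d else 0 := by
    intro a d
    simp [poly, Polynomial.coeff_C_mul, Polynomial.coeff_X_pow]
  have he : ∀ a, (poly a).eval t = ∑ i ∈ Finset.range N, a i * t ^ i := by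
    intro a
    simp [poly, Polynomial.eval_finsetSum]
  have key : (Polynomial.X : Polynomial A) ^ N ∣ poly p * poly q -
      poly (fun n => ∑ ij ∈ Finset.HasAntidiagonal.antidiagonal n, p ij.1 * q ij.2) := by
    rw [Polynomial.X_pow_dvd_iff]
    intro d hd
    rw [Polynomial.coeff_sub, Polynomial.coeff_mul, hc, if_pos hd, sub_eq_zero]
    refine Finset.sum_congr rfl fun ij h => ?_
    rw [Finset.HasAntidiagonal.mem_antidiagonal] at h
    rw [hc, hc, if_pos (by omega), if_pos (by omega)]
  obtain ⟨r, hr⟩ := key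
  have := congrArg (Polynomial.eval t) hr
  simp only [Polynomial.eval_sub, Polynomial.eval_mul, he, Polynomial.eval_pow,
    Polynomial.eval_X] at this
  exact ⟨_, this⟩

lemma ident1 {z u ia ib : A} (ha : (1 - z) * ia = 1) (hb : (1 - z * u) * ib = 1) :
    (1 + u) * (1 - z - z * u) * ia * ib - 1 = u * (1 - z - z * u - z ^ 2) * ia * ib := by
  grind

lemma ident2 {z u ia ib ic ie : A} (ha : (1 - z) * ia = 1) (hb : (1 - z * u) * ib = 1)
    (hc : (1 - z - z * u) * ic = 1) (he : (1 - z - z * u - z ^ 2) * ie = 1) :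
    (u * (1 - z - z * u - z ^ 2) * ia * ib) *
      ((1 - z - z * u - z * (1 - z * u)) * (1 - z * u) * ia * ic * ie) =
    u * (1 - z - z * u - z ^ 2) * ia * ib + (1 - z - z * u - z ^ 2) * ia * ib * ic
      - (1 - z - z ^ 2) * ia * ia := by
  grind

lemma ident3 {z u ia ib ic ie : A} (ha : (1 - z) * ia = 1) (hb : (1 - z * u) * ib = 1)
    (hc : (1 - z - z * u) * ic = 1) (he : (1 - z - z * u - z ^ 2) * ie = 1) :
    (1 - z - z * u - z ^ 2) * ia * ib * ic = 1 +
      z * (1 - z) ^ 2 * ((1 + u) * (1 - z - z * u) * ia * ib) *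
      ((1 - z - z * u - z ^ 2) * ia * ib * ic) *
      ((1 - z - z * u - z * (1 - z * u)) * (1 - z * u) * ia * ic * ie) := by
  have h1 : z * (1 - z) ^ 2 * ((1 + u) * (1 - z - z * u) * ia * ib) *
      ((1 - z - z * u - z ^ 2) * ia * ib * ic) *
      ((1 - z - z * u - z * (1 - z * u)) * (1 - z * u) * ia * ic * ie) =
      z * (1 + u) * (1 - z - z * u - z * (1 - z * u)) * ia * ib * ic *
      (((1 - z) * ia) ^ 2 * ((1 - z * u) * ib) * ((1 - z - z * u) * ic) *
        ((1 - z - z * u - z ^ 2) * ie)) := by ring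
  rw [h1, ha, hb, hc, he]
  clear h1 he
  grind

lemma main_dvd {z u ia ib ic ie : A} (ha : (1 - z) * ia = 1) (hb : (1 - z * u) * ib = 1)
    (hc : (1 - z - z * u) * ic = 1) (he : (1 - z - z * u - z ^ 2) * ie = 1)
    (ε : A →+* A) (hz : ε z = z) (hu : ε u = 0)
    (hcan : ∀ (N : ℕ) (w : A), z ^ N ∣ u * w → z ^ N ∣ w) (N : ℕ) :
    z ^ N ∣ ∑ i ∈ Finset.range N, BT.pp (1 : A) i * (z * (1 - z) ^ 2) ^ i -
      (1 - z - z ^ 2) * ia * ia := by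
  have hea : ε ia = ia := by
    have := congrArg ε ha
    simp only [map_mul, map_sub, map_one, hz] at this
    grind
  have heb : ε ib = 1 := by
    have := congrArg ε hb
    simpa [hz, hu] using this
  have hec : ε ic = ia := by
    have := congrArg ε hc
    simp only [map_mul, map_sub, map_one, hz, hu] at this
    grind
  have i1 := ident1 ha hb
  have i2 := ident2 ha hb hc he
  have i3 := ident3 ha hb hc he
  have hex : ε ((1 + u) * (1 - z - z * u) * ia * ib) = 1 := by
    simp only [map_mul, map_sub, map_add, map_one, hz, hu, hea, heb]
    linear_combination ha
  have hePhi : ε ((1 - z - z * u - z ^ 2) * ia * ib * ic) = (1 - z - z ^ 2) * ia * ia := by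
    simp only [map_mul, map_sub, map_one, map_pow, hz, hu, hea, heb, hec]
    ring
  set x := (1 + u) * (1 - z - z * u) * ia * ib with hx
  set Φ := (1 - z - z * u - z ^ 2) * ia * ib * ic with hΦ
  set Ψ := (1 - z - z * u - z * (1 - z * u)) * (1 - z * u) * ia * ic * ie with hΨ
  set t := z * (1 - z) ^ 2 with ht
  rw [← i1] at i2
  have het : ε t = t := by simp [ht, hz]
  have hC : ∀ N, z ^ N ∣ ∑ i ∈ Finset.range N, BT.pp x i * t ^ i - Φ →
      z ^ N ∣ ∑ i ∈ Finset.range N, BT.pp (1 : A) i * t ^ i - (1 - z - z ^ 2) * ia * ia := by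
    intro N h
    have := map_dvd ε h
    simpa only [map_pow, hz, map_sub, map_sum, map_mul, BT.map_pp, hex, het, hePhi] using this
  refine hC N ?_
  induction N with
  | zero => simp
  | succ N ih =>
    have hCN := hC N ih
    set P := ∑ i ∈ Finset.range N, BT.pp x i * t ^ i with hP
    set Q := ∑ i ∈ Finset.range N, BT.qq x i * t ^ i with hQ
    set C := ∑ i ∈ Finset.range N, BT.pp (1 : A) i * t ^ i with hCdef
    have hQΨ : z ^ N ∣ Q - Ψ := by
      rcases Nat.eq_zero_or_pos N with h0 | h0
      · subst h0; simp
      have e1 : (x - 1) * Q = (x - 1) + P - C := by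
        rw [hQ, Finset.mul_sum]
        simp only [← mul_assoc, BT.qq_eq]
        have : ∀ i, ((if i = 0 then x - 1 else 0) + BT.pp x i - BT.pp 1 i) * t ^ i =
            (if i = 0 then (x - 1) * t ^ i else 0) + BT.pp x i * t ^ i - BT.pp 1 i * t ^ i := by
          intro i
          split_ifs <;> ring
        simp only [this]
        rw [Finset.sum_sub_distrib, Finset.sum_add_distrib, Finset.sum_ite_eq']
        simp [h0, hP, hCdef]
      have e2 : u * (Q - Ψ) = ((1 - z) * (1 - z * u) * ie) *
          ((P - Φ) - (C - (1 - z - z ^ 2) * ia * ia)) := by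
        have e3 : (x - 1) * (Q - Ψ) = (P - Φ) - (C - (1 - z - z ^ 2) * ia * ia) := by
          linear_combination e1 - i2
        rw [← e3, i1]
        have : (1 - z) * (1 - z * u) * ie * (u * (1 - z - z * u - z ^ 2) * ia * ib * (Q - Ψ)) =
          (((1 - z) * ia) * ((1 - z * u) * ib) * ((1 - z - z * u - z ^ 2) * ie)) *
            (u * (Q - Ψ)) := by ring
        rw [this, ha, hb, he]; ring
      apply hcan
      rw [e2]
      exact Dvd.dvd.mul_left (dvd_sub ih hCN) _
    rw [Finset.sum_range_succ']
    simp only [BT.pp_succ, BT.pp_zero]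
    obtain ⟨r1, h1⟩ := conv_dvd t (BT.pp x) (BT.qq x) N
    rw [← hP, ← hQ] at h1
    obtain ⟨r2, h2⟩ := ih
    obtain ⟨r3, h3⟩ := hQΨ
    have e4 : ∑ n ∈ Finset.range N, (x * ∑ ij ∈ Finset.HasAntidiagonal.antidiagonal n,
        BT.pp x ij.1 * BT.qq x ij.2) * t ^ (n + 1) = t * x * ∑ n ∈ Finset.range N,
        (∑ ij ∈ Finset.HasAntidiagonal.antidiagonal n, BT.pp x ij.1 * BT.qq x ij.2) * t ^ n := by
      rw [Finset.mul_sum]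
      refine Finset.sum_congr rfl fun n _ => ?_
      ring
    rw [e4]
    set S := ∑ n ∈ Finset.range N,
        (∑ ij ∈ Finset.HasAntidiagonal.antidiagonal n, BT.pp x ij.1 * BT.qq x ij.2) * t ^ n
    have h1' : P * Q - S = z ^ N * (((1 - z) ^ 2) ^ N * r1) := by
      rw [h1, ht, mul_pow]; ring
    refine ⟨(1 - z) ^ 2 * x * (r2 * Q + Φ * r3 - ((1 - z) ^ 2) ^ N * r1), ?_⟩
    have e5 : t * x * S + 1 * t ^ 0 - Φ = t * x * ((P - Φ) * Q + Φ * (Q - Ψ) - (P * Q - S)) := by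
      linear_combination -i3
    rw [e5, h1', h2, h3, ht]
    ring

end algebra

section lagrange
open PowerSeries

lemma dvd_series (N : ℕ) :
    (X : ℚ⟦X⟧) ^ N ∣ ∑ i ∈ Finset.range N, BT.pp (1 : ℚ⟦X⟧) i * (X * (1 - X) ^ 2) ^ i -
      (1 - X - X ^ 2) * mk 1 * mk 1 := by
  have hunit : ∀ f : (Polynomial ℚ)⟦X⟧, constantCoeff f = 1 → ∃ g, f * g = 1 := by
    intro f hf
    have : IsUnit f := by
      rw [PowerSeries.isUnit_iff_constantCoeff, hf]
      exact isUnit_one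
    exact this.exists_right_inv
  let u : (Polynomial ℚ)⟦X⟧ := C (Polynomial.X)
  obtain ⟨ib, hb⟩ := hunit (1 - X * u) (by simp)
  obtain ⟨ic, hc⟩ := hunit (1 - X - X * u) (by simp)
  obtain ⟨ie, he⟩ := hunit (1 - X - X * u - X ^ 2) (by simp)
  have ha : (1 - X : (Polynomial ℚ)⟦X⟧) * mk 1 = 1 := by
    rw [mul_comm]; exact mk_one_mul_one_sub_eq_one _
  have h := main_dvd ha hb hc he
    (PowerSeries.map ((Polynomial.C).comp (Polynomial.evalRingHom (0 : ℚ))))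
    (by simp) (by simp [u])
    (by
      intro N w hw
      rw [X_pow_dvd_iff] at hw ⊢
      intro m hm
      have := hw m hm
      simp only [u, coeff_C_mul] at this
      simpa using this) N
  have h' := map_dvd (PowerSeries.map (Polynomial.evalRingHom (0 : ℚ))) h
  have hm : (PowerSeries.map (Polynomial.evalRingHom (0 : ℚ))) (mk 1) = mk 1 := by
    ext n; simp
  simpa only [map_pow, map_sub, map_sum, map_mul, BT.map_pp, map_one, PowerSeries.map_X, hm]
    using h'

lemma coeff_aux_zero (d : ℕ) : coeff 0 ((1 - 3 * X) * (mk 1 : ℚ⟦X⟧) ^ (d + 1)) = 1 := by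
  simp

lemma coeff_aux_succ (d m : ℕ) : coeff (m + 1) ((1 - 3 * X) * (mk 1 : ℚ⟦X⟧) ^ (d + 1)) =
    ((d + (m + 1)).choose d : ℚ) - 3 * ((d + m).choose d : ℚ) := by
  rw [mk_one_pow_eq_mk_choose_add]
  have : (1 - 3 * X) * (mk fun n => ((d + n).choose d : ℚ)) =
    (mk fun n => ((d + n).choose d : ℚ)) - C 3 * (X * (mk fun n => ((d + n).choose d : ℚ))) := by
    have : (C 3 : ℚ⟦X⟧) = 3 := map_ofNat _ _
    rw [this]; ring
  rw [this, map_sub, coeff_C_mul, coeff_succ_X_mul]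
  simp

lemma coeff_diag (e : ℕ) : coeff e ((1 - 3 * X) * (mk 1 : ℚ⟦X⟧) ^ (2 * e + 1)) =
    if e = 0 then 1 else 0 := by
  cases e with
  | zero => simp
  | succ e =>
    rw [coeff_aux_succ, if_neg (by omega)]
    have := Nat.choose_mul_succ_eq (3 * e + 2) (2 * e + 2)
    rw [show 3 * e + 2 + 1 - (2 * e + 2) = e + 1 by omega] at this
    have h : ((3 * e + 2).choose (2 * e + 2) : ℚ) * (3 * e + 2 + 1) =
      ((3 * e + 2 + 1).choose (2 * e + 2) : ℚ) * (e + 1) := by exact_mod_cast this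
    rw [show 2 * (e + 1) + (e + 1) = 3 * e + 2 + 1 by ring,
      show 2 * (e + 1) + e = 3 * e + 2 by ring, show 2 * (e + 1) = 2 * e + 2 by ring]
    have h0 : (e + 1 : ℚ) ≠ 0 := by positivity
    apply mul_right_cancel₀ h0
    linear_combination -h

lemma a_mul : (mk 1 : ℚ⟦X⟧) * (1 - X) = 1 := mk_one_mul_one_sub_eq_one _

lemma deriv_a : d⁄dX ℚ (mk 1 : ℚ⟦X⟧) = (mk 1) ^ 2 := by
  have h := congrArg (d⁄dX ℚ) a_mul
  rw [Derivation.leibniz, map_sub, derivative_X, Derivation.map_one_eq_zero] at h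
  simp only [smul_eq_mul] at h
  have h2 := a_mul
  linear_combination (mk 1 : ℚ⟦X⟧) * h - (d⁄dX ℚ (mk 1 : ℚ⟦X⟧)) * h2

lemma coeff_t_pow (M i : ℕ) (hi : i ≤ M + 1) :
    coeff M (d⁄dX ℚ ((X * (1 - X) ^ 2 : ℚ⟦X⟧) ^ i) * (mk 1) ^ (2 * M + 2)) =
      if i = M + 1 then (M + 1 : ℚ) else 0 := by
  cases i with
  | zero => simp
  | succ k =>
    obtain ⟨e, rfl⟩ := Nat.exists_eq_add_of_le (show k ≤ M by omega)
    have hdt : d⁄dX ℚ (X * (1 - X) ^ 2 : ℚ⟦X⟧) = (1 - X) * (1 - 3 * X) := by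
      rw [Derivation.leibniz, Derivation.leibniz_pow, map_sub, derivative_X,
        Derivation.map_one_eq_zero]
      simp only [smul_eq_mul, nsmul_eq_mul]
      push_cast
      ring
    have hpow : (mk 1 : ℚ⟦X⟧) ^ (2 * k + 1) * (1 - X) ^ (2 * k + 1) = 1 := by
      rw [← mul_pow, a_mul, one_pow]
    have : d⁄dX ℚ ((X * (1 - X) ^ 2 : ℚ⟦X⟧) ^ (k + 1)) * (mk 1) ^ (2 * (k + e) + 2) =
        C (k + 1 : ℚ) * (X ^ k * ((1 - 3 * X) * (mk 1) ^ (2 * e + 1))) := by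
      have hC : (C (k + 1 : ℚ) : ℚ⟦X⟧) = (k : ℚ⟦X⟧) + 1 := by simp
      rw [Derivation.leibniz_pow, hdt, hC]
      simp only [smul_eq_mul, nsmul_eq_mul, Nat.add_sub_cancel]
      push_cast
      have e1 : (mk 1 : ℚ⟦X⟧) ^ (2 * (k + e) + 2) =
        (mk 1) ^ (2 * k + 1) * (mk 1) ^ (2 * e + 1) := by ring
      rw [e1]
      have e2 : ((k : ℚ⟦X⟧) + 1) * ((X * (1 - X) ^ 2) ^ k * ((1 - X) * (1 - 3 * X))) *
          ((mk 1) ^ (2 * k + 1) * (mk 1) ^ (2 * e + 1)) =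
          ((mk 1 : ℚ⟦X⟧) ^ (2 * k + 1) * (1 - X) ^ (2 * k + 1)) *
          (((k : ℚ⟦X⟧) + 1) * (X ^ k * ((1 - 3 * X) * (mk 1) ^ (2 * e + 1)))) := by
        rw [mul_pow, ← pow_mul]; ring
      rw [e2, hpow, one_mul]
    rw [this, coeff_C_mul, add_comm k e, coeff_X_pow_mul, coeff_diag]
    by_cases h : e = 0
    · subst h; simp
    · rw [if_neg h, if_neg (by omega)]; simp

lemma coeff_final (M : ℕ) (c : ℕ → ℕ)
    (h : (X : ℚ⟦X⟧) ^ (M + 2) ∣ ∑ i ∈ Finset.range (M + 2), (c i : ℚ⟦X⟧) * (X * (1 - X) ^ 2) ^ i -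
      (1 - X - X ^ 2) * mk 1 * mk 1) :
    (M + 1 : ℚ) * c (M + 1) = coeff M ((1 - 3 * X) * (mk 1 : ℚ⟦X⟧) ^ (2 * M + 4 + 1)) := by
  obtain ⟨r, hr⟩ := h
  have hB : d⁄dX ℚ ((1 - X - X ^ 2) * mk 1 * mk 1 : ℚ⟦X⟧) = (1 - 3 * X) * (mk 1) ^ 3 := by
    rw [Derivation.leibniz, Derivation.leibniz, deriv_a, map_sub, map_sub,
      Derivation.leibniz_pow, derivative_X, Derivation.map_one_eq_zero]
    simp only [smul_eq_mul, nsmul_eq_mul]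
    push_cast
    have h2 := a_mul
    linear_combination (1 + 2 * X) * (mk 1 : ℚ⟦X⟧) ^ 2 * h2
  have h1 := congrArg (fun f => coeff M (d⁄dX ℚ f * (mk 1) ^ (2 * M + 2))) hr
  beta_reduce at h1
  rw [map_sub, hB, sub_mul, map_sub, map_sum, Finset.sum_mul, map_sum] at h1
  have h3 : ∀ i ∈ Finset.range (M + 2),
      coeff M (d⁄dX ℚ ((c i : ℚ⟦X⟧) * (X * (1 - X) ^ 2) ^ i) * (mk 1) ^ (2 * M + 2)) =
      if i = M + 1 then (M + 1 : ℚ) * c i else 0 := by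
    intro i hi
    rw [Finset.mem_range] at hi
    rw [← nsmul_eq_mul, map_nsmul, smul_mul_assoc, map_nsmul, coeff_t_pow M i (by omega)]
    split_ifs
    · rw [nsmul_eq_mul, mul_comm]
    · simp
  rw [Finset.sum_congr rfl h3, Finset.sum_ite_eq', if_pos (by simp)] at h1
  have h4 : coeff M (d⁄dX ℚ (X ^ (M + 2) * r : ℚ⟦X⟧) * (mk 1) ^ (2 * M + 2)) = 0 := by
    have : d⁄dX ℚ (X ^ (M + 2) * r : ℚ⟦X⟧) * (mk 1) ^ (2 * M + 2) = X ^ (M + 1) *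
      ((X * d⁄dX ℚ r + ((M : ℚ⟦X⟧) + 2) * r) * (mk 1) ^ (2 * M + 2)) := by
      rw [Derivation.leibniz, Derivation.leibniz_pow, derivative_X]
      simp only [smul_eq_mul, nsmul_eq_mul, show M + 2 - 1 = M + 1 by omega]
      push_cast
      ring
    rw [this]
    exact (X_pow_dvd_iff.1 (dvd_mul_right _ _)) M (by omega)
  rw [h4, sub_eq_zero] at h1
  rw [h1]
  congr 1
  ring

end lagrange

theorem count_synchronized_intervals (n : ℕ) (hn : 1 ≤ n) :
    n * (n + 1) * Set.ncard {p : BT × BT | BT.interval p n ∧ BT.synced p} =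
      2 * Nat.choose (3 * n) (n - 1) := by
  obtain ⟨M, rfl⟩ := Nat.exists_eq_add_of_le' hn
  have hd := dvd_series (M + 2)
  simp only [← BT.ncard_eq] at hd
  have h := coeff_final M
    (fun k => Set.ncard {p : BT × BT | BT.interval p k ∧ BT.synced p}) hd
  generalize Set.ncard {p : BT × BT | BT.interval p (M + 1) ∧ BT.synced p} = c at h
  have hc : PowerSeries.coeff M ((1 - 3 * PowerSeries.X) *
      (PowerSeries.mk 1 : PowerSeries ℚ) ^ (2 * M + 4 + 1)) =
      ((3 * M + 4).choose (2 * M + 4) : ℚ) - 3 * ((3 * M + 3).choose (2 * M + 4) : ℚ) := by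
    cases M with
    | zero => rw [coeff_aux_zero]; simp
    | succ M =>
      rw [coeff_aux_succ]
      rw [show 2 * (M + 1) + 4 + (M + 1) = 3 * (M + 1) + 4 by ring,
        show 2 * (M + 1) + 4 + M = 3 * (M + 1) + 3 by ring]
  rw [hc] at h
  have p1 : (3 * M + 4).choose (2 * M + 4) =
      (3 * M + 3).choose (2 * M + 3) + (3 * M + 3).choose (2 * M + 4) :=
    Nat.choose_succ_succ _ _
  have p2 := Nat.choose_succ_right_eq (3 * M + 3) (2 * M + 3)
  rw [show 3 * M + 3 - (2 * M + 3) = M by omega] at p2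
  have p3 : (3 * M + 3).choose (2 * M + 3) = (3 * M + 3).choose M :=
    Nat.choose_symm_of_eq_add (by ring)
  rw [show M + 1 - 1 = M by omega, show 3 * (M + 1) = 3 * M + 3 by ring, ← p3]
  have p1' : ((3 * M + 4).choose (2 * M + 4) : ℚ) =
      (3 * M + 3).choose (2 * M + 3) + (3 * M + 3).choose (2 * M + 4) := by exact_mod_cast p1
  have p2' : ((3 * M + 3).choose (2 * M + 4) : ℚ) * (2 * M + 3 + 1) =
      (3 * M + 3).choose (2 * M + 3) * M := by exact_mod_cast p2
  have goal : ((M + 1 : ℚ) * (M + 1 + 1)) * c = 2 * (3 * M + 3).choose (2 * M + 3) := by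
    rw [p1'] at h
    linear_combination (M + 2 : ℚ) * h - p2'
  exact_mod_cast goal
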